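/- arXiv:1403.2264 — 2 statements merged into one kernel-verified Lean document; each statement's English description precedes it below -/
import Mathlib

section
/- Let N be a positive integer with odd prime divisors p₁, …, p_r and with 2-adic valuation k, and let ζ ∈ ℂ be a primitive N-th root of unity. Let E ⊆ ℂ be the field generated over ℚ by the square roots √(p₁*), …, √(p_r*) (where p* = (−1)^{(p−1)/2}·p for an odd prime p), together with √(−1) if k ≥ 2, and additionally √2 if k ≥ 3. Then E is contained in ℚ(ζ), and E equals the fixed field ℚ(ζ)^{G²}, where G = Gal(ℚ(ζ)/ℚ) and G² is the subgroup generated by squares of elements of G. -/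
lemma aux_odd_pow (p : ℕ) (hp : p.Prime) (hodd : Odd p) (a : ℤ) (ha : ¬ (p:ℤ) ∣ a)
    (hsq : ∃ b : ℤ, (p:ℤ) ∣ b ^ 2 - a) (k : ℕ) :
    ∃ b : ℤ, (p:ℤ) ^ (k+1) ∣ b ^ 2 - a := by
  have hpi : Prime (p:ℤ) := Nat.prime_iff_prime_int.mp hp
  induction k with
  | zero => simpa using hsq
  | succ k ih =>
    obtain ⟨b, c, hc⟩ := ih
    have hb : ¬ (p:ℤ) ∣ 2 * b := by
      intro h
      rcases hpi.dvd_or_dvd h with h | h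
      · have h2 : p ∣ 2 := by exact_mod_cast h
        have := (Nat.prime_dvd_prime_iff_eq hp Nat.prime_two).mp h2
        subst this
        exact absurd hodd (by decide)
      · apply ha
        have : a = b * b - (p:ℤ) * ((p:ℤ)^k * c) := by linear_combination -hc
        rw [this]
        exact dvd_sub (h.mul_left b) (dvd_mul_right _ _)
    obtain ⟨u, v, huv⟩ := (hpi.coprime_iff_not_dvd.mpr hb)
    refine ⟨b + (-c * v) * (p:ℤ)^(k+1), c * u + (c*v)^2 * (p:ℤ)^k, ?_⟩
    linear_combination hc - c * (p:ℤ)^(k+1) * huv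

lemma aux_two_pow (a : ℤ) (ha : (8:ℤ) ∣ a - 1) (k : ℕ) :
    ∃ b : ℤ, (2:ℤ) ^ (k+3) ∣ b ^ 2 - a := by
  induction k with
  | zero => exact ⟨1, by obtain ⟨c, hc⟩ := ha; exact ⟨-c, by linear_combination -hc⟩⟩
  | succ k ih =>
    obtain ⟨b, c, hc⟩ := ih
    have hb : Odd b := by
      have : Odd (b^2) := by
        obtain ⟨d, hd⟩ := ha
        exact ⟨2 ^ (k+2) * c + 4 * d, by linear_combination hc + hd⟩
      rcases Int.even_or_odd b with h | h
      · exact absurd (h.pow_of_ne_zero two_ne_zero) (Int.not_even_iff_odd.mpr this)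
      · exact h
    obtain ⟨d, hd⟩ := hb
    refine ⟨b + c * 2^(k+2), c * (d + 1) + c^2 * 2^k, ?_⟩
    linear_combination hc + c * (2:ℤ)^(k+3) * hd

lemma aux_square (N : ℕ) (hN : 0 < N) (a : ℤ) (hco : ∀ p : ℕ, p.Prime → p ∣ N → ¬ (p:ℤ) ∣ a)
    (hsq : ∀ p : ℕ, p.Prime → Odd p → p ∣ N → ∃ b : ℤ, (p:ℤ) ∣ b ^ 2 - a)
    (h4 : 4 ∣ N → (4:ℤ) ∣ a - 1) (h8 : 8 ∣ N → (8:ℤ) ∣ a - 1) :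
    ∃ b : ℤ, (N:ℤ) ∣ b ^ 2 - a := by
  induction N using Nat.recOnPosPrimePosCoprime with
  | zero => omega
  | one => simp
  | prime_pow p n hp hn =>
    obtain ⟨k, rfl⟩ : ∃ k, n = k + 1 := ⟨n - 1, by omega⟩
    rcases hp.eq_two_or_odd' with rfl | ho
    · match k with
      | 0 =>
        refine ⟨1, ?_⟩
        have := hco 2 hp (by simp)
        push_cast at *
        omega
      | 1 =>
        have := h4 (by norm_num)
        exact ⟨1, by push_cast; omega⟩
      | k + 2 =>
        push_cast
        exact aux_two_pow a (h8 (Dvd.intro_left (2^k) (by ring))) k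
    · push_cast
      exact aux_odd_pow p hp ho a (hco p hp (dvd_pow_self p (by omega)))
        (hsq p hp ho (dvd_pow_self p (by omega))) k
  | coprime m n hm hn hmn ihm ihn =>
    obtain ⟨b, c, hb⟩ := ihm (by omega) (fun p hp h => hco p hp (h.mul_right n))
      (fun p hp ho h => hsq p hp ho (h.mul_right n)) (fun h => h4 (h.mul_right n))
      (fun h => h8 (h.mul_right n))
    obtain ⟨b', c', hb'⟩ := ihn (by omega) (fun p hp h => hco p hp (h.mul_left m))
      (fun p hp ho h => hsq p hp ho (h.mul_left m)) (fun h => h4 (h.mul_left m))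
      (fun h => h8 (h.mul_left m))
    obtain ⟨u, v, huv⟩ := Nat.isCoprime_iff_coprime.mpr hmn
    refine ⟨b * (v * n) + b' * (u * m), ?_⟩
    push_cast
    apply (Nat.isCoprime_iff_coprime.mpr hmn).mul_dvd
    · have : b * (v * n) + b' * (u * m) = b + m * (u * (b' - b)) := by
        linear_combination b * huv
      rw [this]
      exact ⟨c + 2 * b * (u * (b' - b)) + m * (u * (b' - b))^2, by linear_combination hb⟩
    · have : b * (v * n) + b' * (u * m) = b' + n * (v * (b - b')) := by
        linear_combination b' * huv
      rw [this]
      exact ⟨c' + 2 * b' * (v * (b - b')) + n * (v * (b - b'))^2, by linear_combination hb'⟩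

lemma aux_gauss {L : Type*} [Field L] [CharZero L] (p : ℕ) (hp : p.Prime) (hodd : Odd p)
    (ξ : L) (hξ : IsPrimitiveRoot ξ p) :
    ∃ g : L, g ^ 2 = (-1) ^ ((p-1)/2) * (p : L) ∧ ∀ (σ : L →+* L) (a : ℕ), ¬ p ∣ a →
      σ ξ = ξ ^ a → σ g = g → IsSquare (a : ZMod p) := by
  have : Fact p.Prime := ⟨hp⟩
  have hp2 : p ≠ 2 := by rintro rfl; exact absurd hodd (by decide)
  have hc2 : ringChar (ZMod p) ≠ 2 := by rwa [ZMod.ringChar_zmod_n]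
  let χ : MulChar (ZMod p) L := (quadraticChar (ZMod p)).ringHomComp (Int.castRingHom L)
  have hχ1 : χ ≠ 1 := by
    rw [Ne, MulChar.ringHomComp_eq_one_iff (Int.cast_injective)]
    exact quadraticChar_ne_one hc2
  have hχq : χ.IsQuadratic := (quadraticChar_isQuadratic (ZMod p)).comp _
  let ψ : AddChar (ZMod p) L := AddChar.zmodChar p hξ.pow_eq_one
  have hψ : ψ.IsPrimitive := AddChar.zmodChar_primitive_of_primitive_root p hξ
  have hg := gaussSum_sq hχ1 hχq hψ
  have hg' : gaussSum χ ψ ^ 2 = (-1) ^ ((p-1)/2) * (p : L) := by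
    rw [hg, ZMod.card]
    congr 1
    have : (p - 1)/2 = p / 2 := by obtain ⟨m, rfl⟩ := hodd; omega
    rw [this]
    change ((quadraticChar (ZMod p) (-1) : ℤ) : L) = _
    rw [quadraticChar_neg_one hc2, ZMod.card, ZMod.χ₄_eq_neg_one_pow (Nat.odd_iff.mp hodd)]
    push_cast; rfl
  refine ⟨gaussSum χ ψ, hg', ?_⟩
  intro σ a hpa hσ hfix
  have hne : gaussSum χ ψ ≠ 0 := by
    intro h
    rw [h] at hg'
    have : (p : L) ≠ 0 := Nat.cast_ne_zero.mpr hp.ne_zero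
    have h1 : ((-1 : L)) ^ ((p-1)/2) ≠ 0 := pow_ne_zero _ (by norm_num)
    exact mul_ne_zero h1 this (by rw [← hg']; ring)
  have ha0 : (a : ZMod p) ≠ 0 := by rwa [Ne, ZMod.natCast_eq_zero_iff]
  have hms := gaussSum_mulShift χ ψ (Units.mk0 (a : ZMod p) ha0)
  have hσg : σ (gaussSum χ ψ) = gaussSum χ (ψ.mulShift (a : ZMod p)) := by
    simp only [gaussSum, map_sum, map_mul]
    refine Finset.sum_congr rfl fun x _ => ?_
    congr 1
    · exact map_intCast σ _
    · rw [AddChar.mulShift_apply]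
      have h1 : ψ x = ξ ^ x.val := AddChar.zmodChar_apply _ _
      have h2 : ψ ((a : ZMod p) * x) = ξ ^ (a * x.val) := by
        have := AddChar.zmodChar_apply' hξ.pow_eq_one (a * x.val)
        rw [← this]; congr 1; simp
      rw [h1, h2, map_pow, hσ, pow_mul]
  rw [Units.val_mk0, ← hσg, hfix] at hms
  have hχa : χ (a : ZMod p) = 1 := mul_right_cancel₀ hne (by rw [hms, one_mul])
  rw [← quadraticChar_one_iff_isSquare ha0]
  have : ((quadraticChar (ZMod p) a : ℤ) : L) = 1 := hχa
  exact_mod_cast this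

lemma aux_four {L : Type*} [Field L] (ξ : L) (hξ : IsPrimitiveRoot ξ 4) :
    ξ ^ 2 = -1 ∧ ∀ (σ : L →+* L) (a : ℕ), σ ξ = ξ ^ a → σ ξ = ξ → (4:ℤ) ∣ a - 1 := by
  constructor
  · have h2 : IsPrimitiveRoot (ξ ^ 2) 2 := hξ.pow (by norm_num) (by norm_num)
    exact h2.eq_neg_one_of_two_right
  · intro σ a h1 h2
    rw [h2] at h1
    have h3 : ξ ^ 1 = ξ ^ a := by rw [pow_one]; exact h1
    rw [(hξ.isOfFinOrder (by norm_num)).pow_eq_pow_iff_modEq, ← hξ.eq_orderOf] at h3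
    simpa using (Nat.modEq_iff_dvd.mp h3)

lemma aux_eight {L : Type*} [Field L] [CharZero L] (ξ : L) (hξ : IsPrimitiveRoot ξ 8) :
    (ξ - ξ ^ 3) ^ 2 = 2 ∧ ∀ (σ : L →+* L) (a : ℕ), σ ξ = ξ ^ a → (4:ℤ) ∣ a - 1 →
      σ (ξ - ξ ^ 3) = ξ - ξ ^ 3 → (8:ℤ) ∣ a - 1 := by
  have h4 : ξ ^ 4 = -1 := by
    have h2 : IsPrimitiveRoot (ξ ^ 4) 2 := hξ.pow (by norm_num) (by norm_num)
    exact h2.eq_neg_one_of_two_right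
  have hs : (ξ - ξ ^ 3) ^ 2 = 2 := by linear_combination (ξ ^ 2 - 2) * h4
  refine ⟨hs, ?_⟩
  intro σ a h1 ha h2
  by_contra hcon
  obtain ⟨m, rfl⟩ : ∃ m, a = 8 * m + 5 := ⟨a / 8, by omega⟩
  have h5 : σ ξ = - ξ := by
    rw [h1, pow_add, pow_mul, hξ.pow_eq_one, one_pow]
    linear_combination ξ * h4
  rw [map_sub, map_pow, h5] at h2
  have h0 : ξ - ξ ^ 3 = 0 := by
    have : (2:L) * (ξ - ξ ^ 3) = 0 := by linear_combination -h2
    exact (mul_eq_zero.mp this).resolve_left two_ne_zero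
  rw [h0] at hs
  norm_num at hs

/-- Square roots of a common number generate the same fields. -/
lemma aux_mem {x y : ℂ} (K : IntermediateField ℚ ℂ) (h : x ^ 2 = y ^ 2) (hy : y ∈ K) : x ∈ K := by
  rcases sq_eq_sq_iff_eq_or_eq_neg.mp h with rfl | rfl
  · exact hy
  · exact neg_mem hy

open IntermediateField

/-- Let `N` be a positive integer with `2`-adic valuation `k`, and let
`ζ ∈ ℂ` be a primitive `N`-th root of unity.  Let `E ⊆ ℂ` be the field
generated over `ℚ` by the square roots `√(p*)` for the odd primes `p`
dividing `N` (where `p* = (-1)^((p-1)/2) * p`), together with `√(-1)` if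
`k ≥ 2` and additionally `√2` if `k ≥ 3`.  Then `E ⊆ ℚ(ζ)` and `E` equals the
fixed field of the subgroup `G²` generated by the squares of elements of
`G = Gal(ℚ(ζ)/ℚ)`. -/
theorem field_E_eq_fixedField_squares_of_cyclotomic
    (N : ℕ) (hN : 0 < N) (ζ : ℂ) (hζ : IsPrimitiveRoot ζ N)
    (E : IntermediateField ℚ ℂ)
    (hE : E = IntermediateField.adjoin ℚ
      ({x : ℂ | ∃ p : ℕ, p.Prime ∧ p ∣ N ∧ Odd p ∧
          x ^ 2 = (-1 : ℂ) ^ ((p - 1) / 2) * (p : ℂ)}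
        ∪ (if 2 ≤ N.factorization 2 then {x : ℂ | x ^ 2 = -1} else ∅)
        ∪ (if 3 ≤ N.factorization 2 then {x : ℂ | x ^ 2 = 2} else ∅))) :
    E ≤ ℚ⟮ζ⟯ ∧
      E = (IntermediateField.fixedField
          (Subgroup.closure
            (Set.range fun g : ℚ⟮ζ⟯ ≃ₐ[ℚ] ℚ⟮ζ⟯ => g ^ 2))).map ℚ⟮ζ⟯.val := by

  have : NeZero N := ⟨hN.ne'⟩
  have hcyc : IsCyclotomicExtension {N} ℚ ℚ⟮ζ⟯ := by
    change IsCyclotomicExtension {N} ℚ ℚ⟮ζ⟯.toSubalgebra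
    rw [IntermediateField.adjoin_simple_toSubalgebra_of_isAlgebraic
      (hζ.isIntegral hN).tower_top.isAlgebraic]
    exact hζ.adjoin_isCyclotomicExtension ℚ
  have hfin : FiniteDimensional ℚ ℚ⟮ζ⟯ := IsCyclotomicExtension.finiteDimensional {N} ℚ ℚ⟮ζ⟯
  have hgal : IsGalois ℚ ℚ⟮ζ⟯ := IsCyclotomicExtension.isGalois {N} ℚ ℚ⟮ζ⟯
  have hz := IsCyclotomicExtension.zeta_spec N ℚ ℚ⟮ζ⟯
  set z : ℚ⟮ζ⟯ := IsCyclotomicExtension.zeta N ℚ ℚ⟮ζ⟯ with hzdef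
  have hprim : ∀ d, d ∣ N → IsPrimitiveRoot (z ^ (N / d)) d := fun d hd =>
    hz.pow hN (Nat.div_mul_cancel hd).symm
  have hk : ∀ k, k ≤ N.factorization 2 ↔ 2 ^ k ∣ N := fun k =>
    (Nat.prime_two.pow_dvd_iff_le_factorization hN.ne').symm
  have hk2 : 2 ≤ N.factorization 2 ↔ 4 ∣ N := hk 2
  have hk3 : 3 ≤ N.factorization 2 ↔ 8 ∣ N := hk 3
  simp only [hk2, hk3] at hE
  have key : ∀ x ∈ ({x : ℂ | ∃ p : ℕ, p.Prime ∧ p ∣ N ∧ Odd p ∧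
          x ^ 2 = (-1 : ℂ) ^ ((p - 1) / 2) * (p : ℂ)}
        ∪ (if 4 ∣ N then {x : ℂ | x ^ 2 = -1} else ∅)
        ∪ (if 8 ∣ N then {x : ℂ | x ^ 2 = 2} else ∅) : Set ℂ),
      x ∈ ℚ⟮ζ⟯ ∧ ∃ q : ℚ, x ^ 2 = (q : ℂ) := by
    rintro x ((⟨p, hp, hpN, hodd, hx⟩ | hx) | hx)
    · obtain ⟨g, hg, -⟩ := aux_gauss p hp hodd _ (hprim p hpN)
      refine ⟨aux_mem _ ?_ g.2, (-1) ^ ((p - 1) / 2) * p, by rw [hx]; push_cast; rfl⟩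
      rw [hx]
      have := congrArg (fun t : ℚ⟮ζ⟯ => (t : ℂ)) hg
      push_cast at this
      exact this.symm
    · split_ifs at hx with h4
      · have hx : x ^ 2 = -1 := hx
        have hg := (aux_four _ (hprim 4 h4)).1
        refine ⟨aux_mem _ ?_ (z ^ (N / 4)).2, -1, by rw [hx]; push_cast; rfl⟩
        rw [hx]
        have := congrArg (fun t : ℚ⟮ζ⟯ => (t : ℂ)) hg
        push_cast at this ⊢
        exact this.symm
      · exact hx.elim
    · split_ifs at hx with h8
      · have hx : x ^ 2 = 2 := hx
        have hg := (aux_eight _ (hprim 8 h8)).1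
        refine ⟨aux_mem _ ?_ (z ^ (N / 8) - (z ^ (N / 8)) ^ 3).2, 2, by rw [hx]; push_cast; rfl⟩
        rw [hx]
        have := congrArg (fun t : ℚ⟮ζ⟯ => (t : ℂ)) hg
        push_cast at this ⊢
        exact this.symm
      · exact hx.elim
  set H := Subgroup.closure (Set.range fun g : ℚ⟮ζ⟯ ≃ₐ[ℚ] ℚ⟮ζ⟯ => g ^ 2) with hH
  have hEL : E ≤ ℚ⟮ζ⟯ := by
    rw [hE, IntermediateField.adjoin_le_iff]
    exact fun x hx => (key x hx).1
  refine ⟨hEL, le_antisymm ?_ ?_⟩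
  · rw [hE, IntermediateField.adjoin_le_iff]
    intro x hx
    obtain ⟨hxL, q, hq⟩ := key x hx
    refine ⟨⟨x, hxL⟩, ?_, rfl⟩
    change (⟨x, hxL⟩ : ℚ⟮ζ⟯) ∈ IntermediateField.fixedField H
    set y : ℚ⟮ζ⟯ := ⟨x, hxL⟩
    have hy : y ^ 2 = algebraMap ℚ ℚ⟮ζ⟯ q := by
      apply Subtype.ext
      simpa [y] using hq
    have hle : H ≤ MulAction.stabilizer (ℚ⟮ζ⟯ ≃ₐ[ℚ] ℚ⟮ζ⟯) y := by
      rw [hH, Subgroup.closure_le]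
      rintro _ ⟨g, rfl⟩
      change (g ^ 2) y = y
      have h1 : (g y) ^ 2 = y ^ 2 := by rw [← map_pow, hy, AlgEquiv.commutes]
      rw [pow_two, AlgEquiv.mul_apply]
      rcases sq_eq_sq_iff_eq_or_eq_neg.mp h1 with h | h
      · rw [h, h]
      · rw [h, map_neg, h, neg_neg]
    rw [IntermediateField.mem_fixedField_iff]
    exact fun f hf => hle hf
  · rw [IntermediateField.map_le_iff_le_comap]
    rw [← IsGalois.fixedField_fixingSubgroup (h := hgal) (E.comap ℚ⟮ζ⟯.val)]
    apply IntermediateField.fixedField_antitone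
    intro σ hσ
    rw [IntermediateField.mem_fixingSubgroup_iff] at hσ
    have hfix : ∀ y : ℚ⟮ζ⟯, (y : ℂ) ∈ E → σ y = y := fun y hy => hσ y hy
    have hirr := Polynomial.cyclotomic.irreducible_rat hN
    let e := IsCyclotomicExtension.autEquivPow ℚ⟮ζ⟯ hirr
    set u : (ZMod N)ˣ := e σ with hu
    have hspec : z ^ (u : ZMod N).val = σ z := hz.autToPow_spec ℚ σ
    set a : ℕ := (u : ZMod N).val with ha
    have hau : (a : ZMod N) = u := ZMod.natCast_zmod_val _
    have hcop : a.Coprime N := ZMod.val_coe_unit_coprime u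
    have hσpow : ∀ n, (σ : ℚ⟮ζ⟯ →+* ℚ⟮ζ⟯) (z ^ n) = (z ^ n) ^ a := by
      intro n
      rw [map_pow, ← pow_mul, mul_comm, pow_mul, hspec]
      rfl
    have h4' : 4 ∣ N → (4:ℤ) ∣ a - 1 := by
      intro h4
      obtain ⟨h, h'⟩ := aux_four _ (hprim 4 h4)
      refine h' σ a (hσpow _) (hfix _ ?_)
      rw [hE]
      refine IntermediateField.subset_adjoin _ _ (Or.inl (Or.inr ?_))
      rw [if_pos h4]
      have := congrArg (fun t : ℚ⟮ζ⟯ => (t : ℂ)) h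
      push_cast at this
      simpa using this
    have h8' : 8 ∣ N → (8:ℤ) ∣ a - 1 := by
      intro h8
      obtain ⟨h, h'⟩ := aux_eight _ (hprim 8 h8)
      refine h' σ a (hσpow _) (h4' (dvd_trans (by norm_num) h8)) (hfix _ ?_)
      rw [hE]
      refine IntermediateField.subset_adjoin _ _ (Or.inr ?_)
      rw [if_pos h8]
      have := congrArg (fun t : ℚ⟮ζ⟯ => (t : ℂ)) h
      push_cast at this
      exact this
    have hnd : ∀ p : ℕ, p.Prime → p ∣ N → ¬ p ∣ a := fun p hp hpN hpa =>
      hp.one_lt.ne' (Nat.dvd_one.mp (hcop ▸ Nat.dvd_gcd hpa hpN))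
    have hodd' : ∀ p : ℕ, p.Prime → Odd p → p ∣ N → ∃ b : ℤ, (p:ℤ) ∣ b ^ 2 - a := by
      intro p hp ho hpN
      obtain ⟨g, hg, hg'⟩ := aux_gauss p hp ho _ (hprim p hpN)
      obtain ⟨b, hb⟩ := hg' σ a (hnd p hp hpN) (hσpow _) (hfix _ (by
        rw [hE]
        refine IntermediateField.subset_adjoin _ _ (Or.inl (Or.inl ⟨p, hp, hpN, ho, ?_⟩))
        have := congrArg (fun t : ℚ⟮ζ⟯ => (t : ℂ)) hg
        push_cast at this
        exact this))
      obtain ⟨c, rfl⟩ := ZMod.intCast_surjective b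
      refine ⟨c, ?_⟩
      rw [← ZMod.intCast_zmod_eq_zero_iff_dvd]
      push_cast
      rw [hb]; ring
    obtain ⟨b, hb⟩ := aux_square N hN a
      (fun p hp hpN h => hnd p hp hpN (by exact_mod_cast h)) hodd' h4' h8'
    have hb' : (b : ZMod N) ^ 2 = u := by
      rw [← ZMod.intCast_zmod_eq_zero_iff_dvd] at hb
      push_cast at hb
      rw [← hau]
      exact sub_eq_zero.mp hb
    have hbu : IsUnit (b : ZMod N) := by
      rw [← isUnit_pow_iff two_ne_zero, hb']
      exact u.isUnit
    obtain ⟨v, hv⟩ := hbu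
    have hvu : v ^ 2 = u := by
      apply Units.ext
      rw [Units.val_pow_eq_pow_val, hv, hb']
    have hτ : e.symm (v ^ 2) = σ := by
      rw [hvu, hu]
      exact e.symm_apply_apply σ
    have hτ' := (map_pow e.symm v 2).symm.trans hτ
    exact Subgroup.subset_closure ⟨e.symm v, hτ'⟩
end

section
/- Let M ⊆ ℂ be a finite Galois extension of ℚ whose Galois group Gal(M/ℚ) is a generalized dihedral group, and let F be a subfield of M with F ⊆ ℝ. Let N be a positive integer and λ ∈ ℂ a primitive N-th root of unity. Then [F ∩ ℚ(λ) : ℚ] ≤ 2^{ω(N) − c₁(N) − c₂(N)}. -/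
open IntermediateField Classical

/-- Writing `n = 2^k * (2m+1)`, `c₁(n) = 0` if `k = 0` or `k = 2`,
`c₁(n) = 1` if `k = 1`, and `c₁(n) = -1` if `k ≥ 3`. -/
def c1 (n : ℕ) : ℤ :=
  if n.factorization 2 = 0 ∨ n.factorization 2 = 2 then 0
  else if n.factorization 2 = 1 then 1
  else -1

/-- `c₂(n) = 1` if `4 ∣ n` or some prime `p ≡ -1 (mod 4)` divides `n`,
and `c₂(n) = 0` otherwise. -/
noncomputable def c2 (n : ℕ) : ℤ :=
  if 4 ∣ n ∨ ∃ p : ℕ, p.Prime ∧ p ∣ n ∧ p % 4 = 3 then 1 else 0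


theorem gd_sq_one {H A : Type*} [CommGroup H] [Group A]
    (hA : ∀ a b : A, a * b = b * a)
    (φ : Multiplicative (ZMod 2) →* MulAut H)
    (hφ : ∀ h : H, φ (Multiplicative.ofAdd (1 : ZMod 2)) h = h⁻¹)
    (f : (H ⋊[φ] Multiplicative (ZMod 2)) →* A) (g : H ⋊[φ] Multiplicative (ZMod 2)) :
    f g ^ 2 = 1 := by
  have h1 : f (SemidirectProduct.inl g.left) ^ 2 = 1 := by
    have h := SemidirectProduct.inl_aut (φ := φ) (Multiplicative.ofAdd (1 : ZMod 2)) g.left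
    rw [hφ] at h
    have h' := congrArg f h
    simp only [map_mul, map_inv] at h'
    rw [hA (f (SemidirectProduct.inr _)), mul_assoc, mul_inv_cancel, mul_one] at h'
    rw [pow_two]
    nth_rewrite 1 [← h']
    exact inv_mul_cancel _
  have h2 : f (SemidirectProduct.inr g.right) ^ 2 = 1 := by
    rw [← map_pow, ← map_pow]
    have : g.right ^ 2 = 1 := by
      generalize g.right = c
      revert c; decide
    simp [this]
  rw [← SemidirectProduct.inl_left_mul_inr_right g, map_mul, (Commute.mul_pow (hA _ _)), h1, h2, one_mul]

theorem idx_bound {U : Type*} [CommGroup U] [Finite U] (S : Subgroup U) (hS : ∀ u : U, u ^ 2 ∈ S) :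
    S.index ≤ Nat.card {u : U // u ^ 2 = 1} ∧
    ∀ z ∈ S, (∀ u : U, u ^ 2 ≠ z) → 2 * S.index ≤ Nat.card {u : U // u ^ 2 = 1} := by
  set R := (powMonoidHom 2 : U →* U).range with hR
  have hRS : R ≤ S := by
    rintro _ ⟨u, rfl⟩; exact hS u
  have hidx : R.index = Nat.card {u : U // u ^ 2 = 1} := by
    have h1 := Subgroup.index_mul_card R
    have h2 := Subgroup.index_mul_card (powMonoidHom 2 : U →* U).ker
    rw [Subgroup.index_ker, ← h1, mul_comm] at h2
    have := Nat.eq_of_mul_eq_mul_right (Nat.card_pos) h2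
    rw [← this]
    rfl
  have hrel := Subgroup.relIndex_mul_index hRS
  have hpos : R.relIndex S ≠ 0 := by
    intro h; rw [h, zero_mul] at hrel
    exact R.index_ne_zero_of_finite hrel.symm
  refine ⟨?_, fun z hz hzs => ?_⟩
  · rw [← hidx, ← hrel]; exact Nat.le_mul_of_pos_left _ (Nat.pos_of_ne_zero hpos)
  · rw [← hidx, ← hrel]
    apply Nat.mul_le_mul_right
    have : R.relIndex S ≠ 1 := by
      rw [Ne, Subgroup.relIndex_eq_one]
      intro h
      obtain ⟨u, hu⟩ := h hz
      exact hzs u hu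
    omega

/-- number of square roots of one -/
noncomputable def nsq (n : ℕ) : ℕ := Nat.card {u : (ZMod n)ˣ // u ^ 2 = 1}

theorem nsq_mul {m n : ℕ} (h : m.Coprime n) : nsq (m * n) = nsq m * nsq n := by
  unfold nsq
  rw [← Nat.card_prod]
  let e : (ZMod (m * n))ˣ ≃* (ZMod m)ˣ × (ZMod n)ˣ :=
    (Units.mapEquiv (ZMod.chineseRemainder h).toMulEquiv).trans MulEquiv.prodUnits
  refine Nat.card_congr ((e.toEquiv.subtypeEquiv (q := fun x => x.1 ^ 2 = 1 ∧ x.2 ^ 2 = 1) ?_).trans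
    (Equiv.subtypeProdEquivProd (p := fun x : (ZMod m)ˣ => x ^ 2 = 1) (q := fun x : (ZMod n)ˣ => x ^ 2 = 1)))
  intro a
  change _ ↔ (e a).1 ^ 2 = 1 ∧ (e a).2 ^ 2 = 1
  rw [← map_eq_one_iff e e.injective, map_pow, Prod.ext_iff]
  rfl

theorem nsq_of_cyclic (n : ℕ) (hn : n ≠ 0) [IsCyclic (ZMod n)ˣ] : nsq n ≤ 2 := by
  have : NeZero n := ⟨hn⟩
  have := IsCyclic.card_pow_eq_one_le (α := (ZMod n)ˣ) (n := 2) (by norm_num)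
  unfold nsq
  rw [Nat.card_eq_fintype_card, Fintype.card_subtype]
  exact this

theorem nsq_odd (n : ℕ) : Odd n → nsq n ≤ 2 ^ n.primeFactors.card := by
  induction n using Nat.recOnPosPrimePosCoprime with
  | zero => intro h; simp at h
  | one =>
    intro _
    have : Subsingleton (ZMod 1)ˣ := inferInstance
    simp only [nsq, Nat.primeFactors_one, Finset.card_empty, pow_zero]
    exact Finite.card_le_one_iff_subsingleton.mpr inferInstance
  | prime_pow p k hp hk =>
    intro ho
    have hp2 : p ≠ 2 := by
      rintro rfl
      have := (Nat.even_pow.mpr ⟨even_two, hk.ne'⟩ : Even (2 ^ k))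
      exact Nat.not_even_iff_odd.mpr ho this
    have := ZMod.isCyclic_units_of_prime_pow p hp hp2 k
    rw [Nat.primeFactors_prime_pow hk.ne' hp]
    simpa using nsq_of_cyclic (p ^ k) (pow_ne_zero _ hp.ne_zero)
  | coprime a b ha hb hab iha ihb =>
    intro ho
    rw [Nat.odd_mul] at ho
    rw [nsq_mul hab, hab.primeFactors_mul, Finset.card_union_of_disjoint hab.disjoint_primeFactors, pow_add]
    exact Nat.mul_le_mul (iha ho.1) (ihb ho.2)

theorem nsq_two_pow (k : ℕ) : nsq (2 ^ (k + 1)) ≤ 4 := by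
  have key : ∀ u : (ZMod (2 ^ (k + 1)))ˣ, u ^ 2 = 1 → (u : ZMod (2 ^ (k + 1))) ∈
      ({1, -1, 2 ^ k + 1, 2 ^ k - 1} : Finset (ZMod (2 ^ (k + 1)))) := by
    intro u hu
    obtain ⟨x, hx⟩ := ZMod.intCast_surjective (u : ZMod (2 ^ (k + 1)))
    have hu' : ((x ^ 2 - 1 : ℤ) : ZMod (2 ^ (k + 1))) = 0 := by
      have := congrArg (Units.val) hu
      push_cast at this ⊢
      rw [hx, this]; simp
    rw [ZMod.intCast_zmod_eq_zero_iff_dvd] at hu'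
    push_cast at hu'
    have hodd : x % 2 = 1 := by
      have : (2 : ℤ) ∣ x ^ 2 - 1 := (dvd_pow_self 2 (by omega)).trans hu'
      by_contra h
      have h0 : x % 2 = 0 := by omega
      obtain ⟨y, rfl⟩ : (2 : ℤ) ∣ x := Int.dvd_of_emod_eq_zero h0
      ring_nf at this
      omega
    have fin : ∀ (s : ℤ), (2 : ℤ) ^ k ∣ x - s → (u : ZMod (2 ^ (k + 1))) = s ∨ (u : ZMod (2 ^ (k + 1))) = 2 ^ k + s := by
      rintro s ⟨t, ht⟩
      have h0 : ((2 : ZMod (2 ^ (k + 1)))) ^ (k + 1) = 0 := by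
        have := ZMod.natCast_self (2 ^ (k + 1))
        push_cast at this; exact this
      have hxe : x = s + 2 ^ k * t := by linarith
      rw [← hx, hxe]
      rcases Int.even_or_odd' t with ⟨r, rfl | rfl⟩
      · left; push_cast
        linear_combination (r : ZMod (2 ^ (k + 1))) * h0
      · right; push_cast
        linear_combination (r : ZMod (2 ^ (k + 1))) * h0
    have hf : (2 : ℤ) ^ k ∣ x - 1 ∨ (2 : ℤ) ^ k ∣ x - (-1) := by
      obtain ⟨y, hy⟩ : ∃ y, x = 2 * y + 1 := ⟨x / 2, by omega⟩
      have h2 : (2 : ℤ) ^ k ∣ (2 * y) * (y + 1) := by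
        rw [hy] at hu'
        obtain ⟨c, hc⟩ := hu'
        refine ⟨c, ?_⟩
        rw [pow_succ (2 : ℤ)] at hc
        linarith [hc]
      rcases Int.even_or_odd y with he | ho
      · left
        have hcop : IsCoprime ((2 : ℤ) ^ k) (y + 1) :=
          IsCoprime.pow_left (Int.isCoprime_iff_gcd_eq_one.mpr (by
            rw [Int.gcd_comm]; exact Int.isCoprime_iff_gcd_eq_one.mp (Int.isCoprime_two_right.mpr he.add_one)))
        have := hcop.dvd_of_dvd_mul_right h2
        rwa [hy, add_sub_cancel_right]
      · right
        have hcop : IsCoprime ((2 : ℤ) ^ k) y :=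
          IsCoprime.pow_left (Int.isCoprime_iff_gcd_eq_one.mpr (by
            rw [Int.gcd_comm]; exact Int.isCoprime_iff_gcd_eq_one.mp (Int.isCoprime_two_right.mpr ho)))
        have h3 : (2 : ℤ) ^ k ∣ (2 * (y + 1)) * y := by convert h2 using 1; ring
        have := hcop.dvd_of_dvd_mul_right h3
        rw [hy, show 2 * y + 1 - (-1) = 2 * (y + 1) by ring]; exact this
    rcases hf with h | h
    · rcases fin _ h with h | h <;> simp [h]
    · rcases fin _ h with h | h <;> simp [h, sub_eq_add_neg]
  have hc : ({1, -1, 2 ^ k + 1, 2 ^ k - 1} : Finset (ZMod (2 ^ (k + 1)))).card ≤ 4 := Finset.card_le_four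
  refine le_trans ?_ hc
  unfold nsq
  rw [← Nat.card_eq_finsetCard]
  refine Nat.card_le_card_of_injective (fun u => ⟨(u.1 : ZMod (2 ^ (k + 1))), key u.1 u.2⟩) ?_
  intro a b hab
  simp only [Subtype.mk.injEq] at hab
  exact Subtype.ext (Units.ext hab)

theorem nsq_le (n : ℕ) (hn : n ≠ 0) : (nsq n : ℝ) ≤ 2 ^ ((n.primeFactors.card : ℤ) - c1 n) := by
  obtain ⟨k, m, hm, rfl⟩ := Nat.exists_eq_pow_mul_and_not_dvd hn 2 (by norm_num)
  have hodd : Odd m := by rwa [← Nat.not_even_iff_odd, even_iff_two_dvd]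
  have hcop : (2 ^ k).Coprime m := (Nat.coprime_two_left.mpr hodd).pow_left k
  have hm0 : m ≠ 0 := by rintro rfl; simp at hm
  have hfac : (2 ^ k * m).factorization 2 = k := by
    rw [Nat.factorization_mul (by positivity) hm0]
    simp [Nat.factorization_eq_zero_of_not_dvd hm, Nat.Prime.factorization_pow Nat.prime_two]
  rw [nsq_mul hcop, hcop.primeFactors_mul, Finset.card_union_of_disjoint hcop.disjoint_primeFactors]
  have h1 : (nsq m : ℝ) ≤ 2 ^ (m.primeFactors.card : ℤ) := by
    exact_mod_cast nsq_odd m hodd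
  have h2 : (nsq (2 ^ k) : ℝ) ≤ 2 ^ (((2 ^ k).primeFactors.card : ℤ) - c1 (2 ^ k * m)) := by
    unfold c1
    rw [hfac]
    rcases k with _ | _ | _ | k
    · have := nsq_odd 1 odd_one
      simpa using this
    · have : nsq 2 ≤ 1 := by
        unfold nsq
        exact Finite.card_le_one_iff_subsingleton.mpr inferInstance
      simpa [Nat.Prime.primeFactors Nat.prime_two] using this
    · have := ZMod.isCyclic_units_four
      have := nsq_of_cyclic 4 (by norm_num)
      rw [Nat.primeFactors_prime_pow (by norm_num) Nat.prime_two]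
      norm_num
      exact this
    · have := nsq_two_pow (k + 2)
      rw [Nat.primeFactors_prime_pow (by omega) Nat.prime_two]
      have h : ¬ (k + 1 + 1 + 1 = 0 ∨ k + 1 + 1 + 1 = 2) := by omega
      have h' : ¬ (k + 1 + 1 + 1 = 1) := by omega
      rw [if_neg h, if_neg h']
      norm_num
      exact_mod_cast this
  push_cast
  calc (nsq (2 ^ k) : ℝ) * nsq m ≤ 2 ^ (((2 ^ k).primeFactors.card : ℤ) - c1 (2 ^ k * m)) * 2 ^ (m.primeFactors.card : ℤ) := by gcongr
    _ = _ := by rw [← zpow_add₀ (by norm_num)]; congr 1; ring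

theorem neg_one_nonsq (n : ℕ) (h : 4 ∣ n ∨ ∃ p : ℕ, p.Prime ∧ p ∣ n ∧ p % 4 = 3) (u : (ZMod n)ˣ) :
    u ^ 2 ≠ -1 := by
  intro hu
  have hu := congrArg Units.val hu
  push_cast at hu
  rcases h with h | ⟨p, hp, hpn, hp4⟩
  · have := congrArg (ZMod.castHom h (ZMod 4)) hu
    simp only [map_pow, map_neg, map_one] at this
    generalize (ZMod.castHom h (ZMod 4)) (u : ZMod n) = x at this
    revert x; decide
  · have : Fact p.Prime := ⟨hp⟩
    have := congrArg (ZMod.castHom hpn (ZMod p)) hu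
    simp only [map_pow, map_neg, map_one] at this
    exact ZMod.mod_four_ne_three_of_sq_eq_neg_one this hp4

theorem restrict_sq {K L : Type*} [Field K] [Field L] [Algebra ℚ K] [Algebra ℚ L] [Algebra K L]
    [IsScalarTower ℚ K L] [Normal ℚ K] (h : ∀ σ : K ≃ₐ[ℚ] K, σ ^ 2 = 1) (τ : L ≃ₐ[ℚ] L) (x : K) :
    (τ ^ 2) (algebraMap K L x) = algebraMap K L x := by
  rw [← AlgEquiv.restrictNormal_commutes (τ ^ 2) K x]
  have : (τ ^ 2).restrictNormal K = 1 := by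
    have := map_pow (AlgEquiv.restrictNormalHom (F := ℚ) (K₁ := L) K) τ 2
    rw [h] at this
    exact this
  rw [this]; rfl

/-- the automorphism with cyclotomic character -1 is complex conjugation -/
theorem neg_one_conj (E : IntermediateField ℚ ℂ) (N : ℕ) [NeZero N] [IsCyclotomicExtension {N} ℚ E]
    (h : Irreducible (Polynomial.cyclotomic N ℚ)) (x : E) :
    (((IsCyclotomicExtension.autEquivPow E h).symm (-1) x : E) : ℂ) = (starRingEnd ℂ) (x : ℂ) := by
  have hz := IsCyclotomicExtension.zeta_spec N ℚ E
  set z := IsCyclotomicExtension.zeta N ℚ E with hzdef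
  set σ := (IsCyclotomicExtension.autEquivPow E h).symm (-1) with hσ
  have h1 : hz.autToPow ℚ σ = -1 := (IsCyclotomicExtension.autEquivPow E h).apply_symm_apply (-1)
  have h2 := hz.autToPow_spec ℚ σ
  rw [h1] at h2
  have h3 : σ z * z = 1 := by
    rw [← h2, ← pow_succ, hz.pow_eq_one_iff_dvd, ← ZMod.natCast_eq_zero_iff]
    simp
  have h4 : ((σ z : E) : ℂ) = (starRingEnd ℂ) (z : ℂ) := by
    have hz' : IsPrimitiveRoot (z : ℂ) N := hz.map_of_injective (f := E.val) E.val.injective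
    have hn := hz'.norm'_eq_one (NeZero.ne N)
    rw [← Complex.inv_eq_conj hn]
    apply eq_inv_of_mul_eq_one_left
    exact_mod_cast congrArg (Subtype.val) h3
  have h5 : E.val.comp (σ : E →ₐ[ℚ] E) = ((Complex.conjAe.toAlgHom).restrictScalars ℚ).comp E.val := by
    apply (hz.powerBasis ℚ).algHom_ext
    rw [IsPrimitiveRoot.powerBasis_gen]
    exact h4
  exact DFunLike.congr_fun h5 x

/-- Let `M ⊆ ℂ` be a finite Galois extension of `ℚ` whose Galois group is a
generalized dihedral group `H ⋊ (ℤ/2ℤ)` (with the nontrivial element of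
`ℤ/2ℤ` acting on the abelian group `H` by inversion), and let `F ⊆ M` be a
subfield with `F ⊆ ℝ`.  If `λ ∈ ℂ` is a primitive `N`-th root of unity, then
`[F ∩ ℚ(λ) : ℚ] ≤ 2 ^ (ω(N) - c₁(N) - c₂(N))`. -/
theorem degree_real_subfield_inf_cyclotomic_le_of_generalized_dihedral
    {H : Type*} [CommGroup H]
    (φ : Multiplicative (ZMod 2) →* MulAut H)
    (hφ : ∀ h : H, φ (Multiplicative.ofAdd (1 : ZMod 2)) h = h⁻¹)
    (M : IntermediateField ℚ ℂ) [FiniteDimensional ℚ M] [IsGalois ℚ M]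
    (e : (M ≃ₐ[ℚ] M) ≃* (H ⋊[φ] Multiplicative (ZMod 2)))
    (F : IntermediateField ℚ ℂ) (hFM : F ≤ M)
    (hFreal : ∀ x ∈ F, (x : ℂ).im = 0)
    (N : ℕ) (hN : 0 < N) (lam : ℂ) (hlam : IsPrimitiveRoot lam N) :
    (Module.finrank ℚ (F ⊓ ℚ⟮lam⟯ : IntermediateField ℚ ℂ) : ℝ)
      ≤ 2 ^ ((N.primeFactors.card : ℤ) - c1 N - c2 N) := by
  have : NeZero N := ⟨hN.ne'⟩
  have hcyc : IsCyclotomicExtension {N} ℚ ℚ⟮lam⟯ := by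
    change IsCyclotomicExtension {N} ℚ (ℚ⟮lam⟯).toSubalgebra
    rw [IntermediateField.adjoin_simple_toSubalgebra_of_isAlgebraic
      ((hlam.isIntegral hN).tower_top (A := ℚ)).isAlgebraic]
    exact hlam.adjoin_isCyclotomicExtension ℚ
  have hirr := Polynomial.cyclotomic.irreducible_rat hN
  have hKF : F ⊓ ℚ⟮lam⟯ ≤ F := inf_le_left
  have hKE : F ⊓ ℚ⟮lam⟯ ≤ ℚ⟮lam⟯ := inf_le_right
  generalize hE : ℚ⟮lam⟯ = E at *
  generalize hK : F ⊓ E = K at *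
  have hab : IsAbelianGalois ℚ E := IsCyclotomicExtension.isAbelianGalois {N} ℚ _
  have hfd : FiniteDimensional ℚ E := IsCyclotomicExtension.finiteDimensional {N} ℚ _
  have hKM : K ≤ M := hKF.trans hFM
  have hKab : IsAbelianGalois ℚ K := IsAbelianGalois.of_algHom (L := K) (M := E) ((inclusion hKE).toRingHom.toRatAlgHom)
  have hsq : ∀ σ : K ≃ₐ[ℚ] K, σ ^ 2 = 1 := by
    let _ : Algebra K M := (inclusion hKM).toAlgebra
    have : IsScalarTower ℚ K M := IsScalarTower.of_algebraMap_eq fun x => rfl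
    intro σ
    obtain ⟨τ, rfl⟩ := AlgEquiv.restrictNormalHom_surjective (F := ℚ) (K₁ := K) M σ
    have := gd_sq_one (fun a b : K ≃ₐ[ℚ] K => IsMulCommutative.is_comm.comm a b) φ hφ
      ((AlgEquiv.restrictNormalHom (F := ℚ) (K₁ := M) K).comp e.symm.toMonoidHom) (e τ)
    simpa using this
  let _ : Algebra K E := (inclusion hKE).toAlgebra
  have : IsScalarTower ℚ K E := IsScalarTower.of_algebraMap_eq fun x => rfl
  set K' : IntermediateField ℚ E := IntermediateField.restrict hKE with hK'
  have hmem : ∀ x : E, x ∈ K' ↔ (x : ℂ) ∈ K := fun x => IntermediateField.mem_restrict hKE x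
  have hrank : Module.finrank ℚ K = Module.finrank ℚ K' :=
    (IntermediateField.restrictAlgEquiv hKE).toLinearEquiv.finrank_eq
  have hindex : Module.finrank ℚ K' = K'.fixingSubgroup.index :=
    (IntermediateField.finrank_eq_fixingSubgroup_index E K')
  set a := IsCyclotomicExtension.autEquivPow E hirr with ha
  set S : Subgroup (ZMod N)ˣ := K'.fixingSubgroup.comap a.symm.toMonoidHom with hS
  have hSi : S.index = K'.fixingSubgroup.index :=
    Subgroup.index_comap_of_surjective _ a.symm.surjective
  have hSsq : ∀ u, u ^ 2 ∈ S := by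
    intro u
    change a.symm (u ^ 2) ∈ K'.fixingSubgroup
    rw [map_pow, IntermediateField.mem_fixingSubgroup_iff]
    intro x hx
    exact restrict_sq (L := E) hsq (a.symm u) ⟨x, (hmem x).1 hx⟩
  have hSneg : -1 ∈ S := by
    change a.symm (-1) ∈ K'.fixingSubgroup
    rw [IntermediateField.mem_fixingSubgroup_iff]
    intro x hx
    apply Subtype.ext
    rw [neg_one_conj E N hirr x]
    exact Complex.conj_eq_iff_im.mpr (hFreal _ (hKF ((hmem x).1 hx)))
  obtain ⟨b1, b2⟩ := idx_bound S hSsq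
  have hle := nsq_le N hN.ne'
  rw [hrank, hindex, ← hSi]
  unfold c2
  split_ifs with hc
  · have := b2 _ hSneg (neg_one_nonsq N hc)
    have h' : (2 : ℝ) * S.index ≤ nsq N := by exact_mod_cast this
    rw [zpow_sub_one₀ (by norm_num)]
    linarith
  · rw [sub_zero]
    exact le_trans (by exact_mod_cast b1) hle
end
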